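/- Let d ≥ 1 and let f : ℝ^d → ℝ be continuously differentiable with L-Lipschitz gradient, satisfying the PL inequality with constant μ > 0, and suppose the minimiser set X* = argmin f is nonempty with minimum value f*. Then for every x ∈ ℝ^d, (μ/2)·d(x, X*)² ≤ f(x) − f* ≤ (L/2)·d(x, X*)². -/

import Mathlib

open scoped RealInnerProductSpace

lemma descent_aux {d : ℕ} (f : EuclideanSpace ℝ (Fin d) → ℝ) (L : ℝ)
    (hf : ContDiff ℝ 1 f)
    (hLip : ∀ x y, ‖gradient f x - gradient f y‖ ≤ L * ‖x - y‖)
    (x v : EuclideanSpace ℝ (Fin d)) :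
    f (x + v) ≤ f x + ⟪gradient f x, v⟫ + L / 2 * ‖v‖ ^ 2 := by
  have hd : ∀ t : ℝ, HasDerivAt
      (fun t : ℝ => f (x + t • v) - t * ⟪gradient f x, v⟫ - L / 2 * ‖v‖ ^ 2 * t ^ 2)
      (⟪gradient f (x + t • v), v⟫ - ⟪gradient f x, v⟫ - L * ‖v‖ ^ 2 * t) t := by
    intro t
    have h1 : HasFDerivAt f _ (x + t • v) :=
      ((hf.differentiable (by norm_num)) (x + t • v)).hasGradientAt.hasFDerivAt
    have h2 : HasDerivAt (fun t : ℝ => x + t • v) v t := by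
      simpa using ((hasDerivAt_id t).smul_const v).const_add x
    have h3 := h1.comp_hasDerivAt t h2
    have h4 := (h3.sub ((hasDerivAt_id t).mul_const ⟪gradient f x, v⟫)).sub
      (((hasDerivAt_id t).pow 2).const_mul (L / 2 * ‖v‖ ^ 2))
    refine h4.congr_deriv ?_
    simp
    ring
  have hanti := antitoneOn_of_deriv_nonpos (convex_Ici (0 : ℝ))
    (f := fun t : ℝ => f (x + t • v) - t * ⟪gradient f x, v⟫ - L / 2 * ‖v‖ ^ 2 * t ^ 2)
    (fun t _ => (hd t).continuousAt.continuousWithinAt)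
    (fun t _ => (hd t).differentiableAt.differentiableWithinAt)
    (by
      intro t ht
      rw [interior_Ici] at ht
      have ht0 : 0 < t := ht
      rw [(hd t).deriv, ← inner_sub_left]
      have h1 := real_inner_le_norm (gradient f (x + t • v) - gradient f x) v
      have h2 := hLip (x + t • v) x
      rw [add_sub_cancel_left, norm_smul, Real.norm_of_nonneg ht0.le] at h2
      have h3 := mul_le_mul_of_nonneg_right h2 (norm_nonneg v)
      nlinarith)
  have := hanti (show (0 : ℝ) ∈ Set.Ici 0 by simp) (show (1 : ℝ) ∈ Set.Ici 0 by simp) zero_le_one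
  simp only [zero_smul, one_smul, add_zero] at this
  linarith

lemma lower_aux {d : ℕ} (f : EuclideanSpace ℝ (Fin d) → ℝ) (fstar L μ : ℝ)
    (hL : 0 < L) (hμ : 0 < μ)
    (hf : ContDiff ℝ 1 f)
    (hLip : ∀ x y, ‖gradient f x - gradient f y‖ ≤ L * ‖x - y‖)
    (hlb : ∀ x, fstar ≤ f x)
    (hPL : ∀ x, μ * (f x - fstar) ≤ (1/2) * ‖gradient f x‖^2)
    (c : ℝ) (hc : 0 < c) (hc2 : 2 * c ^ 2 < μ) (x : EuclideanSpace ℝ (Fin d)) :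
    c * Metric.infDist x {y | f y = fstar} ≤ √(f x - fstar) := by
  have hcont : Continuous (fun y => √(f y - fstar) + c * ‖y - x‖) := by
    have := hf.continuous
    fun_prop
  have hlim : Filter.Tendsto (fun y => √(f y - fstar) + c * ‖y - x‖)
      (Filter.cocompact _) Filter.atTop := by
    have h1 : Filter.Tendsto (fun y => c * dist y x)
      (Filter.cocompact (EuclideanSpace ℝ (Fin d))) Filter.atTop :=
      (tendsto_dist_right_cocompact_atTop x).const_mul_atTop hc
    refine Filter.tendsto_atTop_mono (fun y => ?_) h1
    rw [dist_eq_norm]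
    have := Real.sqrt_nonneg (f y - fstar)
    linarith
  obtain ⟨z, hz⟩ := hcont.exists_forall_le hlim
  have hzx := hz x
  simp only [sub_self, norm_zero, mul_zero, add_zero] at hzx
  by_cases hzs : f z = fstar
  · have h1 : Metric.infDist x {y | f y = fstar} ≤ dist x z :=
      Metric.infDist_le_dist_of_mem hzs
    rw [dist_comm, dist_eq_norm] at h1
    have := Real.sqrt_nonneg (f z - fstar)
    nlinarith
  exfalso
  have hpos : 0 < f z - fstar := by
    have := lt_of_le_of_ne (hlb z) (Ne.symm hzs)
    linarith
  set h := √(f z - fstar) with hh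
  have hh0 : 0 < h := Real.sqrt_pos.2 hpos
  have hsq : h ^ 2 = f z - fstar := Real.sq_sqrt hpos.le
  set G := ‖gradient f z‖ with hG
  have hPLz := hPL z
  rw [← hsq] at hPLz
  have hGc : 2 * c * h < G := by
    refine lt_of_pow_lt_pow_left₀ 2 (norm_nonneg _) ?_
    have : 2 * c ^ 2 * h ^ 2 < μ * h ^ 2 := by gcongr
    nlinarith
  have hG0 : 0 < G := lt_trans (by positivity) hGc
  obtain ⟨t, ht0, ht1, ht2⟩ : ∃ t : ℝ, 0 < t ∧ c * (t * G) ≤ h ∧ L * (t * G) ≤ G - 2 * c * h := by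
    refine ⟨min (h / c) ((G - 2 * c * h) / L) / G, ?_, ?_, ?_⟩
    · have : 0 < G - 2 * c * h := by linarith
      positivity
    · rw [div_mul_cancel₀ _ hG0.ne', mul_comm, ← le_div_iff₀ hc]
      exact min_le_left _ _
    · rw [div_mul_cancel₀ _ hG0.ne', mul_comm, ← le_div_iff₀ hL]
      exact min_le_right _ _
  have hdesc := descent_aux f L hf hLip z (-(t • gradient f z))
  rw [inner_neg_right, real_inner_smul_right, real_inner_self_eq_norm_sq, norm_neg, norm_smul,
    Real.norm_of_nonneg ht0.le, ← hG] at hdesc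
  have hy := hz (z + -(t • gradient f z))
  have htri : ‖z + -(t • gradient f z) - x‖ ≤ ‖z - x‖ + t * G := by
    have := norm_sub_le (z - x) (t • gradient f z)
    rw [norm_smul, Real.norm_of_nonneg ht0.le] at this
    refine le_trans (le_of_eq ?_) this
    congr 1
    abel
  have hge : h - c * (t * G) ≤ √(f (z + -(t • gradient f z)) - fstar) := by
    have := mul_le_mul_of_nonneg_left htri hc.le
    linarith
  have hge2 : (h - c * (t * G)) ^ 2 ≤ f (z + -(t • gradient f z)) - fstar := by
    rw [← Real.sq_sqrt (sub_nonneg.2 (hlb (z + -(t • gradient f z))))]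
    exact pow_le_pow_left₀ (by linarith) hge 2
  have hs : 0 < t * G := by positivity
  have h5 := mul_le_mul_of_nonneg_left ht2 hs.le
  have h6 : 0 < t * G * (G - 2 * c * h) := mul_pos hs (by linarith)
  nlinarith [sq_nonneg (c * (t * G))]

/-- quadratic squeeze between the suboptimality gap and the
squared distance to the minimiser set, for a PL function with Lipschitz
gradient. -/
theorem stmt3 (d : ℕ) (hd : 1 ≤ d)
    (f : EuclideanSpace ℝ (Fin d) → ℝ) (fstar L μ : ℝ)
    (hL : 0 < L) (hμ : 0 < μ)
    (hf : ContDiff ℝ 1 f)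
    (hLip : ∀ x y, ‖gradient f x - gradient f y‖ ≤ L * ‖x - y‖)
    (hlb : ∀ x, fstar ≤ f x)
    (hne : {x : EuclideanSpace ℝ (Fin d) | f x = fstar}.Nonempty)
    (hPL : ∀ x, μ * (f x - fstar) ≤ (1/2) * ‖gradient f x‖^2) :
    ∀ x : EuclideanSpace ℝ (Fin d),
      (μ/2) * (Metric.infDist x {y | f y = fstar})^2 ≤ f x - fstar ∧
        f x - fstar ≤ (L/2) * (Metric.infDist x {y | f y = fstar})^2 := by
  intro x
  have hD0 : 0 ≤ Metric.infDist x {y | f y = fstar} := Metric.infDist_nonneg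
  constructor
  · have key : √(μ / 2) * Metric.infDist x {y | f y = fstar} ≤ √(f x - fstar) := by
      have hs : 0 < √(μ / 2) := Real.sqrt_pos.2 (by positivity)
      have hcl : √(μ / 2) ∈ closure (Set.Ioo 0 (√(μ / 2))) := by
        rw [closure_Ioo hs.ne]
        exact ⟨hs.le, le_rfl⟩
      refine closure_minimal (t := {c | c * Metric.infDist x {y | f y = fstar} ≤ √(f x - fstar)})
        ?_ (isClosed_le (by fun_prop) (by fun_prop)) hcl
      rintro c ⟨hc, hc2⟩
      refine lower_aux f fstar L μ hL hμ hf hLip hlb hPL c hc ?_ x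
      have := (Real.lt_sqrt hc.le).1 hc2
      linarith
    have h2 := pow_le_pow_left₀ (by positivity) key 2
    rwa [mul_pow, Real.sq_sqrt (by positivity), Real.sq_sqrt (sub_nonneg.2 (hlb x))] at h2
  · have hcl : IsClosed {y | f y = fstar} := isClosed_eq hf.continuous continuous_const
    obtain ⟨p, hp, hpd⟩ := hcl.exists_infDist_eq_dist hne x
    have hp' : f p = fstar := hp
    have hg : gradient f p = 0 := by
      have hm : IsLocalMin f p := Filter.Eventually.of_forall fun y => by
        rw [hp']; exact hlb y
      simp [gradient, hm.fderiv_eq_zero]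
    have h := descent_aux f L hf hLip p (x - p)
    rw [hg, inner_zero_left, hp', add_sub_cancel] at h
    rw [hpd, dist_eq_norm]
    linarith
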